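/- arXiv:2302.09647 — 2 statements merged into one kernel-verified Lean document; each statement's English description precedes it below -/
import Mathlib

section
/- Let S be a numerical semigroup with multiplicity m and Kunz coordinates (k_1, …, k_{m−1}). Then |I₀(S)| ≤ ∏_{i=1}^{m−1} (k_i + 1), and equality holds if and only if k_1 ≥ k_2 ≥ … ≥ k_{m−1} and k_1 − k_{m−1} ≤ 1 (equivalently, S = {λm : λ ∈ ℕ} ∪ {n ∈ ℕ : n ≥ c} for some integer c > m). -/
/-!
An ideal `E` with minimum `0` is determined by its Kunz coordinates: `n ∈ E` exactly when the
coordinate of `E` at `n % m` is at most `n / m` (`mem_iff_kunzC_le`). As `S ⊆ E`, the coordinates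
of `E` are bounded by those of `S`, so `E ↦ kunzC m E` embeds `I0 S` into the box
`∏ [0, k_i]`, which gives the inequality. Equality holds exactly when every point `e` of the box
comes from an ideal, i.e. when `{n | e (n % m) ≤ n / m}` is closed under adding elements of `S`.

If every point comes from an ideal, the point with `e_d = 0` and all other coordinates maximal
forces `k_{i+d} ≤ k_i`, since `d + w_i(S)` lies in the ideal. The same argument with `d = 2` and
`i = m - 1`, where the sum wraps around modulo `m`, forces `k_1 ≤ k_{m-1} + 1`. Conversely these
inequalities bound the coordinates of every box point well enough to give closure
(`kunzSet_mem_I0`).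
-/

open Set Pointwise

/-- A numerical semigroup: a subset of ℕ containing 0, closed under addition,
with finite complement. -/
def IsNumSgp (S : Set ℕ) : Prop :=
  0 ∈ S ∧ (∀ a ∈ S, ∀ b ∈ S, a + b ∈ S) ∧ Sᶜ.Finite

/-- The set of ideals of `S` whose smallest element is 0. -/
def I0 (S : Set ℕ) : Set (Set ℕ) :=
  {E | 0 ∈ E ∧ E + S ⊆ E}

/-- The genus of `S`: the number of gaps. -/
noncomputable def genus (S : Set ℕ) : ℕ := Sᶜ.ncard

/-- Pseudo-Frobenius numbers of `S`. -/
def PFset (S : Set ℕ) : Set ℕ :=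
  {f | f ∉ S ∧ ∀ s ∈ S, s ≠ 0 → f + s ∈ S}

/-- The type of `S`. -/
noncomputable def typeNS (S : Set ℕ) : ℕ := (PFset S).ncard

/-- The multiplicity of `S`: its least nonzero element. -/
noncomputable def mult (S : Set ℕ) : ℕ := sInf {n | n ∈ S ∧ n ≠ 0}

/-- `wElt E m i` is the least element of `E` congruent to `i` modulo `m`. -/
noncomputable def wElt (E : Set ℕ) (m i : ℕ) : ℕ := sInf {e | e ∈ E ∧ e % m = i % m}

/-- The Frobenius number of `S`: the largest gap. -/
noncomputable def FrobN (S : Set ℕ) : ℕ := sSup Sᶜ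

/-- The Kunz coordinates of an ideal `E` (with respect to multiplicity `m`),
extended by `0` outside the index range `{1, …, m-1}`. -/
noncomputable def kunzC (m : ℕ) (E : Set ℕ) : ℕ → ℕ :=
  fun i => if 1 ≤ i ∧ i < m then wElt E m i / m else 0

lemma mult_spec {S : Set ℕ} (hS : IsNumSgp S) : mult S ∈ S ∧ 0 < mult S := by
  have hne : {n | n ∈ S ∧ n ≠ 0}.Nonempty := by
    obtain ⟨N, hN⟩ := hS.2.2.bddAbove
    refine ⟨N + 1, ?_, by omega⟩
    by_contra h
    have := hN h
    omega
  have := Nat.sInf_mem hne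
  exact ⟨this.1, Nat.pos_of_ne_zero this.2⟩

lemma self_mem_I0 {S : Set ℕ} (hS : IsNumSgp S) : S ∈ I0 S := by
  refine ⟨hS.1, ?_⟩
  rintro _ ⟨a, ha, b, hb, rfl⟩
  exact hS.2.1 a ha b hb

lemma add_mul_mem {S E : Set ℕ} (hE : E ∈ I0 S) {m : ℕ} (hm : m ∈ S) {a : ℕ} (ha : a ∈ E)
    (t : ℕ) : a + m * t ∈ E := by
  induction t with
  | zero => simpa using ha
  | succ t ih => exact hE.2 ⟨a + m * t, ih, m, hm, by simp only; ring⟩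

/-- An ideal is recovered from its Kunz coordinates. The convention `kunzC m E 0 = 0` matches
`0 ∈ E`. -/
lemma mem_iff_kunzC_le {S E : Set ℕ} (hS : IsNumSgp S) (hE : E ∈ I0 S) {m : ℕ} (hm : m ∈ S)
    (hm0 : 0 < m) (n : ℕ) : n ∈ E ↔ kunzC m E (n % m) ≤ n / m := by
  have hlt := Nat.mod_lt n hm0
  have hdiv := Nat.mod_add_div n m
  by_cases h0 : n % m = 0
  · have h1 : kunzC m E (n % m) = 0 := by simp [kunzC, h0]
    rw [h1]
    simp only [Nat.zero_le, iff_true]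
    have := add_mul_mem hE hm hE.1 (n / m)
    rwa [show 0 + m * (n / m) = n by omega] at this
  · have h1 : kunzC m E (n % m) = wElt E m (n % m) / m := by
      simp only [kunzC]
      rw [if_pos ⟨by omega, hlt⟩]
    rw [h1]
    have hne : {e | e ∈ E ∧ e % m = n % m % m}.Nonempty := by
      obtain ⟨N, hN⟩ := hS.2.2.bddAbove
      refine ⟨n + m * (N + 1), ?_, by simp⟩
      have hs : n + m * (N + 1) ∈ S := by
        by_contra h
        have := hN h
        nlinarith
      exact hE.2 ⟨0, hE.1, _, hs, by simp⟩
    obtain ⟨hwE, hwm⟩ := Nat.sInf_mem hne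
    change wElt E m (n % m) ∈ E at hwE
    change wElt E m (n % m) % m = _ at hwm
    rw [Nat.mod_mod] at hwm
    constructor
    · intro hn
      exact Nat.div_le_div_right (Nat.sInf_le ⟨hn, by simp⟩)
    · intro hle
      have hmem := add_mul_mem hE hm hwE (n / m - wElt E m (n % m) / m)
      have hw := Nat.mod_add_div (wElt E m (n % m)) m
      have : wElt E m (n % m) + m * (n / m - wElt E m (n % m) / m) = n := by
        have h2 : m * (wElt E m (n % m) / m) + m * (n / m - wElt E m (n % m) / m)
            = m * (n / m) := by
          rw [← mul_add, Nat.add_sub_cancel' hle]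
        omega
      rwa [this] at hmem

/-- Membership of `q * m + i` for a residue `i < m`. -/
lemma mem_iff_of_lt {S E : Set ℕ} (hS : IsNumSgp S) (hE : E ∈ I0 S) {m : ℕ} (hm : m ∈ S)
    (hm0 : 0 < m) {i : ℕ} (hi : i < m) (q : ℕ) : i + m * q ∈ E ↔ kunzC m E i ≤ q := by
  rw [mem_iff_kunzC_le hS hE hm hm0, Nat.add_mul_mod_self_left, Nat.mod_eq_of_lt hi,
    Nat.add_mul_div_left _ _ hm0, Nat.div_eq_of_lt hi, zero_add]

/-- The set whose Kunz coordinates are prescribed by `e`. -/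
def kunzSet (m : ℕ) (e : ℕ → ℕ) : Set ℕ := {n | e (n % m) ≤ n / m}

lemma kunzSet_mem_I0 {S : Set ℕ} (hS : IsNumSgp S) {m : ℕ} (hm : m ∈ S) (hm0 : 0 < m)
    (hmono : ∀ i j, 1 ≤ i → i ≤ j → j < m → kunzC m S j ≤ kunzC m S i)
    (hwrap : kunzC m S 1 ≤ kunzC m S (m - 1) + 1)
    {e : ℕ → ℕ} (he0 : e 0 = 0) (he : ∀ i, e i ≤ kunzC m S i) :
    kunzSet m e ∈ I0 S := by
  refine ⟨by simp [kunzSet, he0], ?_⟩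
  rintro _ ⟨a, ha, s, hs, rfl⟩
  rw [mem_iff_kunzC_le hS (self_mem_I0 hS) hm hm0] at hs
  simp only [kunzSet, Set.mem_ofPred_eq] at ha ⊢
  have h1 := Nat.mod_lt a hm0
  have h2 := Nat.mod_lt s hm0
  rw [Nat.add_mod_eq_ite, Nat.add_div hm0]
  split_ifs with h
  · by_cases hl : a % m + s % m - m = 0
    · simp [hl, he0]
    · have e1 := he (a % m + s % m - m)
      have e2 := hmono 1 (a % m + s % m - m) le_rfl (by omega) (by omega)
      have e3 := hmono (s % m) (m - 1) (by omega) (by omega) (by omega)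
      omega
  · by_cases hl : s % m = 0
    · rw [hl, add_zero]
      omega
    · have e1 := he (a % m + s % m)
      have e2 := hmono (s % m) (a % m + s % m) (by omega) (by omega) (by omega)
      omega

lemma kunzC_kunzSet {S : Set ℕ} (hS : IsNumSgp S) {m : ℕ} (hm : m ∈ S) (hm0 : 0 < m)
    {e : ℕ → ℕ} (hE : kunzSet m e ∈ I0 S) {i : ℕ} (hi : i < m) :
    kunzC m (kunzSet m e) i = e i := by
  have key : ∀ q, kunzC m (kunzSet m e) i ≤ q ↔ e i ≤ q := by
    intro q
    rw [← mem_iff_of_lt hS hE hm hm0 hi]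
    simp only [kunzSet, Set.mem_ofPred_eq]
    rw [Nat.add_mul_mod_self_left, Nat.mod_eq_of_lt hi,
      Nat.add_mul_div_left _ _ hm0, Nat.div_eq_of_lt hi, zero_add]
  exact le_antisymm ((key _).2 le_rfl) ((key _).1 le_rfl)

lemma kunzC_le {S E : Set ℕ} (hS : IsNumSgp S) (hE : E ∈ I0 S) {m : ℕ} (hm : m ∈ S)
    (hm0 : 0 < m) {i : ℕ} (hi : i < m) : kunzC m E i ≤ kunzC m S i := by
  rw [← mem_iff_of_lt hS hE hm hm0 hi]
  exact hE.2 ⟨0, hE.1, _, (mem_iff_of_lt hS (self_mem_I0 hS) hm hm0 hi _).2 le_rfl, by simp⟩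

theorem stmt_6 (S : Set ℕ) (hS : IsNumSgp S) (m : ℕ) (hm : m = mult S) :
    (I0 S).ncard ≤ ∏ i ∈ Finset.Ico 1 m, (kunzC m S i + 1) ∧
      ((I0 S).ncard = ∏ i ∈ Finset.Ico 1 m, (kunzC m S i + 1) ↔
        ((∀ i j, 1 ≤ i → i ≤ j → j < m → kunzC m S j ≤ kunzC m S i) ∧
          kunzC m S 1 ≤ kunzC m S (m - 1) + 1)) := by
  obtain ⟨hmS, hm0⟩ := mult_spec hS
  rw [← hm] at hmS hm0
  clear hm
  let B : Finset ((i : ℕ) → i ∈ Finset.Ico 1 m → ℕ) :=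
    (Finset.Ico 1 m).pi fun i => Finset.range (kunzC m S i + 1)
  let Φ : Set ℕ → (i : ℕ) → i ∈ Finset.Ico 1 m → ℕ := fun E i _ => kunzC m E i
  have hB : B.card = ∏ i ∈ Finset.Ico 1 m, (kunzC m S i + 1) := by
    simp [B, Finset.card_pi]
  have hinj : Set.InjOn Φ (I0 S) := by
    intro E hE F hF hEF
    have hk : kunzC m E = kunzC m F := by
      funext i
      by_cases hi : i ∈ Finset.Ico 1 m
      · exact congrFun (congrFun hEF i) hi
      · rw [Finset.mem_Ico] at hi
        simp only [kunzC, if_neg hi]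
    ext n
    rw [mem_iff_kunzC_le hS hE hmS hm0, mem_iff_kunzC_le hS hF hmS hm0, hk]
  have hsub : Set.image Φ (I0 S) ⊆ (B : Set _) := by
    rintro _ ⟨E, hE, rfl⟩
    simp only [B, Finset.mem_coe, Finset.mem_pi, Finset.mem_range]
    intro i hi
    exact Nat.lt_succ_of_le (kunzC_le hS hE hmS hm0 (Finset.mem_Ico.1 hi).2)
  have hcard : (Set.image Φ (I0 S)).ncard = (I0 S).ncard := hinj.ncard_image
  rw [← hB, ← hcard, ← Set.ncard_coe_finset B]
  refine ⟨Set.ncard_le_ncard hsub B.finite_toSet, ?_, ?_⟩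
  · intro heq
    have himg : Set.image Φ (I0 S) = (B : Set _) :=
      Set.eq_of_subset_of_ncard_le hsub heq.ge B.finite_toSet
    -- The box point with `0` at `d` and maximal coordinates elsewhere gives an ideal.
    have hex : ∀ d, d < m → ∃ E ∈ I0 S, d ∈ E ∧
        ∀ i, 1 ≤ i → i < m → i ≠ d → kunzC m E i = kunzC m S i := by
      intro d hd
      have hmem : (fun i _ => if i = d then 0 else kunzC m S i :
          (i : ℕ) → i ∈ Finset.Ico 1 m → ℕ) ∈ (B : Set _) := by
        simp only [B, Finset.mem_coe, Finset.mem_pi, Finset.mem_range]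
        intro i hi
        split_ifs <;> omega
      rw [← himg] at hmem
      obtain ⟨E, hE, hEe⟩ := hmem
      have hval : ∀ i, 1 ≤ i → i < m → kunzC m E i = if i = d then 0 else kunzC m S i :=
        fun i h1 h2 => congrFun (congrFun hEe i) (Finset.mem_Ico.2 ⟨h1, h2⟩)
      refine ⟨E, hE, ?_, fun i h1 h2 h3 => by rw [hval i h1 h2, if_neg h3]⟩
      rcases Nat.eq_zero_or_pos d with rfl | hd0
      · exact hE.1
      · have := (mem_iff_of_lt hS hE hmS hm0 hd 0).2 (by rw [hval d hd0 hd, if_pos rfl])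
        simpa using this
    have hSw : ∀ i, i < m → i + m * kunzC m S i ∈ S := fun i hi =>
      (mem_iff_of_lt hS (self_mem_I0 hS) hmS hm0 hi _).2 le_rfl
    constructor
    · intro i j h1 hij hj
      rcases hij.eq_or_lt with rfl | hlt
      · exact le_rfl
      · obtain ⟨E, hE, hdE, hval⟩ := hex (j - i) (by omega)
        rw [← hval j (by omega) hj (by omega), ← mem_iff_of_lt hS hE hmS hm0 hj]
        exact hE.2 ⟨j - i, hdE, _, hSw i (by omega), by simp only; omega⟩
    · rcases Nat.lt_or_ge m 3 with h3 | h3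
      · -- For `m = 2` the indices `1` and `m - 1` agree; for `m = 1` the coordinate vanishes.
        interval_cases m
        · simp [kunzC]
        · simp
      · obtain ⟨E, hE, hdE, hval⟩ := hex 2 (by omega)
        rw [← hval 1 le_rfl (by omega) (by omega),
          ← mem_iff_of_lt hS hE hmS hm0 (by omega : 1 < m)]
        exact hE.2 ⟨2, hdE, _, hSw (m - 1) (by omega), by simp only [mul_add]; omega⟩
  · rintro ⟨hmono, hwrap⟩
    congr 1
    refine hsub.antisymm ?_
    intro e he
    simp only [B, Finset.mem_coe, Finset.mem_pi, Finset.mem_range] at he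
    let f : ℕ → ℕ := fun i => if h : i ∈ Finset.Ico 1 m then e i h else 0
    have hf0 : f 0 = 0 := by simp [f]
    have hf : ∀ i, f i ≤ kunzC m S i := by
      intro i
      simp only [f]
      split_ifs with h
      · exact Nat.le_of_lt_succ (he i h)
      · exact Nat.zero_le _
    have hE := kunzSet_mem_I0 hS hmS hm0 hmono hwrap hf0 hf
    refine ⟨_, hE, ?_⟩
    funext i hi
    change kunzC m (kunzSet m f) i = e i hi
    rw [kunzC_kunzSet hS hmS hm0 hE (Finset.mem_Ico.1 hi).2]
    simp only [f, dif_pos hi]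
end

section
/- Let S ≠ ℕ be a numerical semigroup with multiplicity m. Then: (1) the maximal elements with respect to inclusion of I₀(S) \ {ℕ} are exactly the ideals ℕ \ {i} for i ∈ {1, …, m−1}; and (2) the minimal elements with respect to inclusion of I₀(S) \ {S} are exactly the ideals {0, f} + S for f ∈ PF(S). -/
/-!
Every proper ideal `E` misses some `i` with `1 ≤ i < m`: if `x` is the least element outside `E`,
then `x ≥ m` would give `x - m ∈ E` and hence `x ∈ E`. So `E` lies in the ideal `{i}ᶜ`, and two
such complements are comparable only if they are equal.

Dually, every ideal `E ≠ S` contains a pseudo-Frobenius number, namely the largest element of the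
finite set `E \ S`. For `f ∈ PF(S)` the ideal `{0, f} + S` is just `S ∪ {f}`, so it covers `S`.
-/

open Set Pointwise

/-- All nonzero elements of `S` are at least `m > i`, so no translate by one of them hits `i`. -/
lemma compl_singleton_mem_I0 {S : Set ℕ} {i : ℕ} (hi : 1 ≤ i) (him : i < mult S) :
    ({i}ᶜ : Set ℕ) ∈ I0 S := by
  refine ⟨by simp; omega, ?_⟩
  rintro _ ⟨a, ha, s, hs, rfl⟩
  simp only [mem_compl_iff, mem_singleton_iff] at ha ⊢
  rcases Nat.eq_zero_or_pos s with rfl | hpos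
  · simpa using ha
  · have : mult S ≤ s := Nat.sInf_le ⟨hs, by omega⟩
    omega

lemma mult_mem {S : Set ℕ} (hS : IsNumSgp S) : mult S ∈ S ∧ mult S ≠ 0 := by
  have hne : {n | n ∈ S ∧ n ≠ 0}.Nonempty := by
    by_contra h
    have hsub : Set.Ioi 0 ⊆ Sᶜ := fun n hn hnS =>
      h ⟨n, hnS, (Nat.pos_iff_ne_zero.1 hn)⟩
    exact Set.Ioi_infinite 0 (hS.2.2.subset hsub)
  exact Nat.sInf_mem hne

lemma exists_gap_lt_mult {S E : Set ℕ} (hS : IsNumSgp S) (hE : E ∈ I0 S) (hne : E ≠ Set.univ) :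
    ∃ i, 1 ≤ i ∧ i < mult S ∧ i ∉ E := by
  classical
  have hex : ∃ x, x ∉ E := (Set.ne_univ_iff_exists_notMem E).1 hne
  obtain ⟨hmS, hm0⟩ := mult_mem hS
  have hx : Nat.find hex ∉ E := Nat.find_spec hex
  refine ⟨Nat.find hex, ?_, ?_, hx⟩
  · by_contra h
    have h0 : Nat.find hex = 0 := by omega
    exact hx (h0 ▸ hE.1)
  · by_contra! h
    have hmem : Nat.find hex - mult S ∈ E := by
      by_contra h'
      have := Nat.find_min' hex h'
      omega
    have := hE.2 (Set.add_mem_add hmem hmS)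
    rw [Nat.sub_add_cancel h] at this
    exact hx this

lemma subset_of_mem_I0 {S E : Set ℕ} (hE : E ∈ I0 S) : S ⊆ E := fun s hs => by
  simpa using hE.2 (Set.add_mem_add hE.1 hs)

/-- The translate `f + S` contributes only `f` itself beyond `S`. -/
lemma pair_add_eq_insert {S : Set ℕ} (hS : IsNumSgp S) {f : ℕ} (hf : f ∈ PFset S) :
    ({0, f} : Set ℕ) + S = insert f S := by
  ext x
  constructor
  · rintro ⟨a, rfl | rfl, s, hs, rfl⟩
    · right; simpa using hs
    · rcases eq_or_ne s 0 with rfl | h0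
      · left; simp
      · right; exact hf.2 s hs h0
  · rintro (rfl | hx)
    · exact ⟨x, by simp, 0, hS.1, by simp⟩
    · exact ⟨0, by simp, x, hx, by simp⟩

lemma insert_mem_I0 {S : Set ℕ} (hS : IsNumSgp S) {f : ℕ} (hf : f ∈ PFset S) :
    insert f S ∈ I0 S := by
  refine ⟨Or.inr hS.1, ?_⟩
  rintro _ ⟨a, rfl | ha, s, hs, rfl⟩
  · rcases eq_or_ne s 0 with rfl | h0
    · left; simp
    · right; exact hf.2 s hs h0
  · right; exact hS.2.1 a ha s hs

lemma exists_PF_mem {S E : Set ℕ} (hS : IsNumSgp S) (hE : E ∈ I0 S) (hne : E ≠ S) :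
    ∃ f ∈ PFset S, f ∈ E := by
  have hfin : (E \ S).Finite := hS.2.2.subset fun x hx => hx.2
  have hnon : (E \ S).Nonempty := by
    by_contra h
    rw [Set.not_nonempty_iff_eq_empty, Set.sdiff_eq_empty] at h
    exact hne (h.antisymm (subset_of_mem_I0 hE))
  obtain ⟨f, hf, hmax⟩ := Set.exists_max_image (E \ S) id hfin hnon
  refine ⟨f, ⟨hf.2, fun s hs h0 => ?_⟩, hf.1⟩
  by_contra hns
  have := hmax (f + s) ⟨hE.2 (Set.add_mem_add hf.1 hs), hns⟩
  simp only [id] at this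
  omega

theorem stmt_12 (S : Set ℕ) (hS : IsNumSgp S) (hne : S ≠ Set.univ)
    (m : ℕ) (hm : m = mult S) :
    (∀ E : Set ℕ,
      (E ∈ I0 S ∧ E ≠ Set.univ ∧
          ∀ E' ∈ I0 S, E' ≠ Set.univ → E ⊆ E' → E = E') ↔
        ∃ i, 1 ≤ i ∧ i < m ∧ E = ({i}ᶜ : Set ℕ)) ∧
    (∀ E : Set ℕ,
      (E ∈ I0 S ∧ E ≠ S ∧ ∀ E' ∈ I0 S, E' ≠ S → E' ⊆ E → E' = E) ↔
        ∃ f ∈ PFset S, E = ({0, f} : Set ℕ) + S) := by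
  subst hm
  refine ⟨fun E => ⟨?_, ?_⟩, fun E => ⟨?_, ?_⟩⟩
  · rintro ⟨hE, hEu, hmax⟩
    obtain ⟨i, h1, him, hi⟩ := exists_gap_lt_mult hS hE hEu
    exact ⟨i, h1, him, hmax _ (compl_singleton_mem_I0 h1 him) (by simp)
      (Set.subset_compl_singleton_iff.2 hi)⟩
  · rintro ⟨i, h1, him, rfl⟩
    refine ⟨compl_singleton_mem_I0 h1 him, by simp, fun E' _ hu hsub => hsub.antisymm ?_⟩
    rw [Set.subset_compl_singleton_iff]
    -- If `i ∈ E'` as well, then `E'` is everything.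
    intro hi
    refine hu (Set.eq_univ_of_forall fun x => ?_)
    rcases eq_or_ne x i with rfl | hx
    · exact hi
    · exact hsub hx
  · rintro ⟨hE, hES, hmin⟩
    obtain ⟨f, hf, hfE⟩ := exists_PF_mem hS hE hES
    refine ⟨f, hf, ?_⟩
    rw [pair_add_eq_insert hS hf]
    exact (hmin _ (insert_mem_I0 hS hf) (fun h => hf.1 (h ▸ Set.mem_insert f S))
      (Set.insert_subset hfE (subset_of_mem_I0 hE))).symm
  · rintro ⟨f, hf, rfl⟩
    rw [pair_add_eq_insert hS hf]
    refine ⟨insert_mem_I0 hS hf, fun h => hf.1 (h ▸ Set.mem_insert f S),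
      fun E' hE' hne' hsub => hsub.antisymm ?_⟩
    obtain ⟨g, hg, hgE⟩ := exists_PF_mem hS hE' hne'
    -- The only element of `S ∪ {f}` outside `S` is `f`.
    obtain rfl : g = f := (hsub hgE).resolve_right hg.1
    exact Set.insert_subset hgE (subset_of_mem_I0 hE')
end
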